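/- arXiv:math/9807157 — 2 statements merged into one kernel-verified Lean document; each statement's English description precedes it below -/
import Mathlib

section
/- Let h be a complex number with exp(h) ≠ 1 and let [x] = (exp(hx/2) − exp(−hx/2))/(exp(h/2) − exp(−h/2)) for x ∈ ℂ. Let k ≥ 1 be an integer and let complex numbers L_{i,2k−2} (i ∈ [1−k, k−2]), L_{i,2k−1} (i ∈ [1−k, k−1]), L_{i,2k} (i ∈ [−k, k−1]) and L_{i,2k+1} (i ∈ [−k, k]) be given such that [L_{i,2k−1} − L_{j,2k−1} + t] ≠ 0 for all i ≠ j in [1−k, k−1] and t ∈ {−1, 0, 1}, and [L_{i,2k} − L_{l,2k} + t] ≠ 0 for all i ≠ l in [−k, k−1] and t ∈ {−1, 0, 1}. Then ∑_{s=0}^{1} ∑_{j=1−k}^{k−1} ∑_{l=−k}^{k−1} (−1)^s · ( ∏_{i≠l, i=−k}^{k−1} [L_{i,2k} − L_{j,2k−1} + s − 1] · ∏_{i=1−k}^{k−2} [L_{i,2k−2} − L_{j,2k−1} + s − 1] ) / ( ∏_{i≠j, i=1−k}^{k−1} [L_{i,2k−1} − L_{j,2k−1} + s][L_{i,2k−1}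 − L_{j,2k−1} + s − 1] ) · ( ∏_{i=−k}^{k} [L_{i,2k+1} − L_{l,2k} + s] · ∏_{i≠j, i=1−k}^{k−1} [L_{i,2k−1} − L_{l,2k} + s] ) / ( ∏_{i≠l, i=−k}^{k−1} [L_{i,2k} − L_{l,2k} + s][L_{i,2k} − L_{l,2k} + s − 1] ) = [ ∑_{j=−k+1}^{k−1} L_{j,2k−1} − ∑_{j=−k+1}^{k−2} L_{j,2k−2} − ∑_{j=−k}^{k} L_{j,2k+1} + ∑_{j=−k}^{k−1} L_{j,2k} − 1 ]. (Identity (23a).) -/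
/-- The q-bracket `[x] = (exp(hx/2) - exp(-hx/2))/(exp(h/2) - exp(-h/2))`. -/
noncomputable def qbr (h x : ℂ) : ℂ :=
  (Complex.exp (h * x / 2) - Complex.exp (-(h * x) / 2)) /
    (Complex.exp (h / 2) - Complex.exp (-h / 2))


theorem lag_aux {ι κ : Type*} [Fintype ι] [DecidableEq ι] [Fintype κ]
    (hcard : Fintype.card κ = Fintype.card ι) (u : ι → ℂ) (W : κ → ℂ)
    (hu0 : ∀ i, u i ≠ 0) (hu : ∀ i j, i ≠ j → u i ≠ u j) :
    ∑ i, (∏ t, (u i - W t)) / (∏ i', if i' = i then u i else u i - u i')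
      = 1 - (∏ t, W t) / ∏ i, u i := by
  classical
  let v : Option ι → ℂ := fun o => o.elim 0 u
  have hv : Set.InjOn v (Finset.univ : Finset (Option ι)) := by
    intro a _ b _ hab
    rcases a with _ | a <;> rcases b with _ | b
    · rfl
    · exact absurd hab.symm (hu0 b)
    · exact absurd hab (hu0 a)
    · by_contra hne
      exact hu a b (fun e => hne (by rw [e])) hab
  have hdeg : (∏ t, (Polynomial.X - Polynomial.C (W t))).natDegree = Fintype.card ι := by
    simp [hcard]
  have hmon := Polynomial.monic_prod_X_sub_C W Finset.univ
  have key := Lagrange.coeff_eq_sum hv (P := ∏ t, (Polynomial.X - Polynomial.C (W t))) (by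
    rw [Polynomial.degree_eq_natDegree hmon.ne_zero, hdeg]
    simp only [Finset.card_univ, Fintype.card_option]
    exact_mod_cast Nat.lt_succ_self _)
  have h1 : (∏ t, (Polynomial.X - Polynomial.C (W t))).coeff
      ((Finset.univ : Finset (Option ι)).card - 1) = 1 := by
    have := hmon.coeff_natDegree
    rw [hdeg] at this
    simpa using this
  rw [h1, Fintype.sum_option] at key
  have e0 : ∏ j ∈ (Finset.univ : Finset (Option ι)).erase none, (v none - v j)
      = ∏ i, (- u i) := by
    have : (Finset.univ : Finset (Option ι)).erase none = Finset.univ.image some := by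
      ext x; cases x <;> simp
    rw [this, Finset.prod_image (Option.some_injective _).injOn]
    simp [v]
  have e1 : ∀ i, ∏ j ∈ (Finset.univ : Finset (Option ι)).erase (some i), (v (some i) - v j)
      = ∏ i', if i' = i then u i else u i - u i' := by
    intro i
    have : (Finset.univ : Finset (Option ι)).erase (some i)
        = insert none ((Finset.univ.erase i).image some) := by
      ext x; cases x <;> simp
    rw [this, Finset.prod_insert (by simp), Finset.prod_image (Option.some_injective _).injOn,
      ← Finset.mul_prod_erase Finset.univ _ (Finset.mem_univ i)]
    congr 1
    · simp [v]
    · refine Finset.prod_congr rfl fun x hx => ?_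
      simp [v, (Finset.mem_erase.1 hx).1]
  rw [e0] at key
  simp only [e1] at key
  simp only [Polynomial.eval_prod, Polynomial.eval_sub, Polynomial.eval_X,
    Polynomial.eval_C] at key
  have e2 : (∏ t, (v none - W t)) / ∏ i, (- u i) = (∏ t, W t) / ∏ i, u i := by
    have : ∀ t, v none - W t = (-1) * W t := by intro t; simp [v]
    simp only [this, fun i => neg_eq_neg_one_mul (u i), Finset.prod_mul_distrib,
      Finset.prod_const, Finset.card_univ, hcard]
    exact mul_div_mul_left _ _ (pow_ne_zero _ (by norm_num))
  rw [e2] at key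
  rw [eq_sub_iff_add_eq, add_comm]
  exact key.symm

theorem qbr_den_ne {h : ℂ} (hh : Complex.exp h ≠ 1) :
    Complex.exp (h / 2) - Complex.exp (-h / 2) ≠ 0 := by
  intro e
  apply hh
  have e' := sub_eq_zero.1 e
  have : Complex.exp h = Complex.exp (h/2) * Complex.exp (h/2) := by
    rw [← Complex.exp_add]; ring_nf
  rw [this]
  nth_rewrite 2 [e']
  rw [← Complex.exp_add]; ring_nf; simp

theorem qbr_neg (h x : ℂ) : qbr h (-x) = - qbr h x := by
  unfold qbr
  rw [← neg_div, neg_sub]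
  ring_nf

theorem qbr_one {h : ℂ} (hh : Complex.exp h ≠ 1) : qbr h 1 = 1 := by
  unfold qbr
  rw [mul_one]
  exact div_self (qbr_den_ne hh)

theorem qbr_sub {h : ℂ} (w z : ℂ) (hh : Complex.exp h ≠ 1) :
    Complex.exp (h * z / 2) ^ 2 - Complex.exp (h * w / 2) ^ 2
    = -(Complex.exp (h / 2) - Complex.exp (-h / 2)) * qbr h (w - z) *
      (Complex.exp (h * w / 2) * Complex.exp (h * z / 2)) := by
  have hc := qbr_den_ne hh
  unfold qbr
  have e1 : Complex.exp (h * (w - z) / 2) = Complex.exp (h * w / 2) / Complex.exp (h * z / 2) := by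
    rw [← Complex.exp_sub]; ring_nf
  have e2 : Complex.exp (-(h * (w - z)) / 2) = Complex.exp (h * z / 2) / Complex.exp (h * w / 2) := by
    rw [← Complex.exp_sub]; ring_nf
  rw [e1, e2]
  have := Complex.exp_ne_zero (h * w / 2)
  have := Complex.exp_ne_zero (h * z / 2)
  generalize Complex.exp (h / 2) - Complex.exp (-h / 2) = c at hc ⊢
  field_simp
  ring

theorem br_sum {h : ℂ} (hh : Complex.exp h ≠ 1) {ι κ : Type*} [Fintype ι] [DecidableEq ι]
    [Fintype κ] (hcard : Fintype.card κ = Fintype.card ι) (z : ι → ℂ) (w : κ → ℂ)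
    (hz : ∀ i j, i ≠ j → qbr h (z i - z j) ≠ 0) :
    ∑ i, (∏ t, qbr h (w t - z i)) / (∏ i', if i' = i then 1 else qbr h (z i' - z i))
      = qbr h (∑ t, w t - ∑ i, z i) := by
  have hc := qbr_den_ne hh
  set c := Complex.exp (h / 2) - Complex.exp (-h / 2) with hcdef
  let p : ℂ → ℂ := fun x => Complex.exp (h * x / 2)
  have hp : ∀ x, p x ≠ 0 := fun x => Complex.exp_ne_zero _
  have hs : ∀ w z, p z ^ 2 - p w ^ 2 = -c * qbr h (w - z) * (p w * p z) :=
    fun w z => qbr_sub w z hh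
  have key := lag_aux hcard (fun i => p (z i) ^ 2) (fun t => p (w t) ^ 2)
    (fun i => pow_ne_zero _ (hp _)) (by
      intro i j hij e
      have := hs (z j) (z i)
      rw [sub_eq_zero.2 e] at this
      exact (mul_ne_zero (mul_ne_zero (neg_ne_zero.2 hc) (hz j i hij.symm))
        (mul_ne_zero (hp _) (hp _))) this.symm)
  have hterm : ∀ i, (∏ t, (p (z i) ^ 2 - p (w t) ^ 2)) /
      (∏ i', if i' = i then p (z i) ^ 2 else p (z i) ^ 2 - p (z i') ^ 2)
      = (-c * (∏ t, p (w t)) / ∏ i, p (z i)) *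
       ((∏ t, qbr h (w t - z i)) / (∏ i', if i' = i then 1 else qbr h (z i' - z i))) := by
    intro i
    have n1 : ∏ t, (p (z i) ^ 2 - p (w t) ^ 2) = (-c) ^ Fintype.card ι * (∏ t, qbr h (w t - z i)) *
        ((∏ t, p (w t)) * p (z i) ^ Fintype.card ι) := by
      simp only [hs, Finset.prod_mul_distrib, Finset.prod_const, Finset.card_univ, hcard]
    have n2 : (∏ i', if i' = i then p (z i) ^ 2 else p (z i) ^ 2 - p (z i') ^ 2)
        = (-c)⁻¹ * (-c) ^ Fintype.card ι * (∏ i', if i' = i then 1 else qbr h (z i' - z i)) *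
        ((∏ i, p (z i)) * p (z i) ^ Fintype.card ι) := by
      have : ∀ i', (if i' = i then p (z i) ^ 2 else p (z i) ^ 2 - p (z i') ^ 2)
          = (if i' = i then (-c)⁻¹ else 1) * (-c) * (if i' = i then 1 else qbr h (z i' - z i)) *
            (p (z i') * p (z i)) := by
        intro i'
        split_ifs with e
        · subst e
          field_simp
        · rw [hs]; ring
      simp only [this, Finset.prod_mul_distrib, Finset.prod_const, Finset.card_univ,
        Finset.prod_ite_eq', Finset.mem_univ, if_true]
    have hne : (∏ i', if i' = i then 1 else qbr h (z i' - z i)) ≠ 0 := by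
      refine Finset.prod_ne_zero_iff.2 fun i' _ => ?_
      split_ifs with e
      · exact one_ne_zero
      · exact hz _ _ e
    rw [n1, n2]
    have h1 : ∏ i, p (z i) ≠ 0 := Finset.prod_ne_zero_iff.2 fun _ _ => hp _
    have h2 := hp (z i)
    have h3 := neg_ne_zero.2 hc
    field_simp
  simp only [hterm] at key
  rw [← Finset.mul_sum] at key
  have h1 : ∏ i, p (z i) ≠ 0 := Finset.prod_ne_zero_iff.2 fun _ _ => hp _
  have h2 : ∏ t, p (w t) ≠ 0 := Finset.prod_ne_zero_iff.2 fun _ _ => hp _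
  have e1 : p (∑ t, w t) = ∏ t, p (w t) := by
    simp only [p, ← Complex.exp_sum, Finset.mul_sum, Finset.sum_div]
  have e2 : p (∑ i, z i) = ∏ i, p (z i) := by
    simp only [p, ← Complex.exp_sum, Finset.mul_sum, Finset.sum_div]
  have fin := hs (∑ t, w t) (∑ i, z i)
  rw [e1, e2] at fin
  simp only [Finset.prod_pow] at key
  have h3 : (-c * (∏ t, p (w t)) / ∏ i, p (z i)) ≠ 0 := by
    have := neg_ne_zero.2 hc
    positivity
  apply mul_left_cancel₀ h3
  rw [key]
  field_simp
  linear_combination fin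

theorem br_sum_zero {h : ℂ} (hh : Complex.exp h ≠ 1) {ι κ : Type*} [Fintype ι] [DecidableEq ι]
    [Fintype κ] (hcard : Fintype.card κ + 2 = Fintype.card ι) (z : ι → ℂ) (w : κ → ℂ)
    (hz : ∀ i j, i ≠ j → qbr h (z i - z j) ≠ 0) :
    ∑ i, (∏ t, qbr h (w t - z i)) / (∏ i', if i' = i then 1 else qbr h (z i' - z i)) = 0 := by
  let w1 : Option (Option κ) → ℂ := fun o => o.elim 0 (fun o => o.elim 0 w)
  let w2 : Option (Option κ) → ℂ := fun o => o.elim 1 (fun o => o.elim (-1) w)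
  have hc : Fintype.card (Option (Option κ)) = Fintype.card ι := by simp [← hcard]
  have a1 := br_sum hh hc z w1 hz
  have a2 := br_sum hh hc z w2 hz
  have e : ∑ t, w1 t = ∑ t, w2 t := by simp [w1, w2, Fintype.sum_option]
  rw [e, ← a2, ← sub_eq_zero, ← Finset.sum_sub_distrib] at a1
  rw [← a1]
  refine Finset.sum_congr rfl fun i _ => ?_
  rw [← sub_div]
  congr 1
  simp only [Fintype.prod_option, w1, w2, Option.elim]
  have : qbr h (0 - z i) * qbr h (0 - z i) - qbr h (1 - z i) * qbr h (-1 - z i) = 1 := by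
    have hc := qbr_den_ne hh
    have a := Complex.exp_ne_zero (h * z i / 2)
    have b := Complex.exp_ne_zero (h / 2)
    have e1 : Complex.exp (h * (0 - z i) / 2) = (Complex.exp (h * z i / 2))⁻¹ := by
      rw [← Complex.exp_neg]; ring_nf
    have e2 : Complex.exp (-(h * (0 - z i)) / 2) = (Complex.exp (h * z i / 2)) := by
      ring_nf
    have e3 : Complex.exp (h * (1 - z i) / 2) = Complex.exp (h / 2) / (Complex.exp (h * z i / 2)) := by
      rw [← Complex.exp_sub]; ring_nf
    have e4 : Complex.exp (-(h * (1 - z i)) / 2) = (Complex.exp (h * z i / 2)) / Complex.exp (h / 2) := by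
      rw [← Complex.exp_sub]; ring_nf
    have e5 : Complex.exp (h * (-1 - z i) / 2) = 1 / (Complex.exp (h / 2) * (Complex.exp (h * z i / 2))) := by
      rw [← Complex.exp_add, one_div, ← Complex.exp_neg]; ring_nf
    have e6 : Complex.exp (-(h * (-1 - z i)) / 2) = (Complex.exp (h * z i / 2)) * Complex.exp (h / 2) := by
      rw [← Complex.exp_add]; ring_nf
    have e7 : Complex.exp (-h / 2) = (Complex.exp (h / 2))⁻¹ := by
      rw [← Complex.exp_neg]; ring_nf
    unfold qbr
    rw [e1, e2, e3, e4, e5, e6]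
    rw [div_mul_div_comm, div_mul_div_comm, ← sub_div, div_eq_one_iff_eq (mul_ne_zero hc hc), e7]
    field_simp
    ring
  linear_combination (-(∏ t, qbr h (w t - z i))) * this

/-- full product of brackets -/
noncomputable def prB (h : ℂ) {ι : Type*} [Fintype ι] (f : ι → ℂ) (y : ℂ) : ℂ :=
  ∏ i, qbr h (f i - y)

/-- product of brackets with one index left out -/
noncomputable def peB (h : ℂ) {ι : Type*} [Fintype ι] [DecidableEq ι] (f : ι → ℂ) (j : ι)
    (y : ℂ) : ℂ :=
  ∏ i ∈ Finset.univ.erase j, qbr h (f i - y)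

theorem prB_eq (h : ℂ) {ι : Type*} [Fintype ι] [DecidableEq ι] (f : ι → ℂ) (j : ι) (y : ℂ) :
    prB h f y = qbr h (f j - y) * peB h f j y :=
  (Finset.mul_prod_erase Finset.univ _ (Finset.mem_univ j)).symm

theorem peB_ite (h : ℂ) {ι : Type*} [Fintype ι] [DecidableEq ι] (f : ι → ℂ) (j : ι) (y : ℂ) :
    (∏ i, if i = j then 1 else qbr h (f i - y)) = peB h f j y := by
  rw [← Finset.mul_prod_erase Finset.univ _ (Finset.mem_univ j), if_pos rfl, one_mul]
  exact Finset.prod_congr rfl fun x hx => if_neg (Finset.mem_erase.1 hx).1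

theorem peB_sub (h : ℂ) {ι : Type*} [Fintype ι] [DecidableEq ι] (f : ι → ℂ) (j : ι) (y : ℂ) :
    (∏ i : {i // i ≠ j}, qbr h (f i - y)) = peB h f j y := by
  unfold peB
  exact (Finset.prod_subtype _ (by simp) (fun i => qbr h (f i - y))).symm

theorem prB_shift (h : ℂ) {ι : Type*} [Fintype ι] (f : ι → ℂ) (a y : ℂ) :
    prB h (fun i => f i - a) y = prB h f (y + a) :=
  Finset.prod_congr rfl fun i _ => by congr 1; ring

theorem peB_shift (h : ℂ) {ι : Type*} [Fintype ι] [DecidableEq ι] (f : ι → ℂ) (j : ι) (a y : ℂ) :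
    peB h (fun i => f i - a) j y = peB h f j (y + a) :=
  Finset.prod_congr rfl fun i _ => by congr 1; ring

theorem qbr_symm_ne {h a b : ℂ} (hab : qbr h (a - b) ≠ 0) : qbr h (b - a) ≠ 0 := by
  rw [← neg_sub, qbr_neg]; exact neg_ne_zero.2 hab

theorem two_shift {h : ℂ} (hh : Complex.exp h ≠ 1) {γ κ β : Type*} [Fintype γ] [DecidableEq γ]
    [Fintype κ] [Fintype β] [DecidableEq β] (f : γ → ℂ) (e : ℂ) (g : κ → ℂ) (f' : β → ℂ) (j : β)
    (hcard : Fintype.card κ + Fintype.card β = 2 * Fintype.card γ)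
    (h0 : ∀ i l, i ≠ l → qbr h (f i - f l) ≠ 0)
    (h1 : ∀ i l, i ≠ l → qbr h (f i - f l + 1) ≠ 0)
    (h2 : ∀ i, qbr h (f i - e) ≠ 0) (h3 : ∀ i, qbr h (f i - 1 - e) ≠ 0) :
    ∑ l, prB h g (f l) * peB h f' j (f l) /
        (peB h f l (f l) * (-peB h f l (f l + 1)) * qbr h (e - f l))
      + ∑ l, prB h g (f l - 1) * peB h f' j (f l - 1) /
        (peB h f l (f l - 1) * peB h f l (f l) * qbr h (e - (f l - 1)))
      + prB h g e * peB h f' j e / (prB h f e * prB h f (e + 1)) = 0 := by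
  have hb : 1 ≤ Fintype.card β := Fintype.card_pos_iff.2 ⟨j⟩
  have h1' : ∀ i l, qbr h (f i - (f l - 1)) ≠ 0 := by
    intro i l
    by_cases e : i = l
    · subst e
      have : f i - (f i - 1) = 1 := by ring
      rw [this, qbr_one hh]; exact one_ne_zero
    · have := h1 i l e
      rwa [show f i - (f l - 1) = f i - f l + 1 by ring]
  have I := br_sum_zero hh (ι := (γ ⊕ γ) ⊕ Unit) (κ := κ ⊕ {i // i ≠ j}) (by
      simp only [Fintype.card_sum, Fintype.card_subtype_compl,
        Fintype.card_unique]
      omega)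
    (Sum.elim (Sum.elim f (fun i => f i - 1)) (fun _ => e)) (Sum.elim g (fun i => f' i)) (by
      rintro ((a | a) | a) ((b | b) | b) hab
      · exact h0 a b (fun e => hab (by rw [e]))
      · exact h1' a b
      · exact h2 a
      · exact qbr_symm_ne (h1' b a)
      · have := h0 a b (fun e => hab (by rw [e]))
        simpa using this
      · exact h3 a
      · exact qbr_symm_ne (h2 b)
      · exact qbr_symm_ne (h3 b)
      · exact absurd rfl hab)
  have s1 : ∀ y, ∏ i, qbr h (f i - 1 - y) = prB h f (y + 1) := fun y => prB_shift h f 1 y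
  have s2 : ∀ l y, (∏ i, if i = l then 1 else qbr h (f i - 1 - y)) = peB h f l (y + 1) :=
    fun l y => by rw [← peB_shift, ← peB_ite]
  have s3 : ∀ y, ∏ i, qbr h (f i - y) = prB h f y := fun y => rfl
  have s4 : ∀ y, ∏ i, qbr h (g i - y) = prB h g y := fun y => rfl
  simp only [Fintype.sum_sum_type, Fintype.prod_sum_type, Sum.elim_inl, Sum.elim_inr,
    Sum.inl.injEq, Sum.inr.injEq, reduceCtorEq, if_false, Finset.univ_unique, Finset.sum_singleton,
    Finset.prod_singleton, if_true, mul_one] at I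
  simp only [peB_ite h f, s1, s2, s3, s4, peB_sub h f' j, sub_add_cancel] at I
  rw [← I]
  congr 1
  congr 1
  · refine Finset.sum_congr rfl fun l _ => ?_
    rw [prB_eq h f l (f l + 1), show f l - (f l + 1) = -1 by ring, qbr_neg, qbr_one hh]
    ring
  · refine Finset.sum_congr rfl fun l _ => ?_
    rw [prB_eq h f l (f l - 1), show f l - (f l - 1) = 1 by ring, qbr_one hh]
    ring

theorem core_generic {h : ℂ} (hh : Complex.exp h ≠ 1) {α β γ δ : Type*}
    [Fintype α] [Fintype β] [Fintype γ] [Fintype δ] [DecidableEq β] [DecidableEq γ]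
    (hα : Fintype.card α + 1 = Fintype.card β) (hγ : Fintype.card γ = Fintype.card β + 1)
    (hδ : Fintype.card δ = Fintype.card β + 2)
    (A : α → ℂ) (B : β → ℂ) (C : γ → ℂ) (D : δ → ℂ)
    (hB0 : ∀ i l, i ≠ l → qbr h (B i - B l) ≠ 0)
    (hB1 : ∀ i l, i ≠ l → qbr h (B i - B l + 1) ≠ 0)
    (hC0 : ∀ i l, i ≠ l → qbr h (C i - C l) ≠ 0)
    (hC1 : ∀ i l, i ≠ l → qbr h (C i - C l + 1) ≠ 0)
    (hBC1 : ∀ l j, qbr h (C l - (B j + 1)) ≠ 0)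
    (hBC2 : ∀ l j, qbr h (C l - (B j + 2)) ≠ 0) :
    ∑ j, ∑ l, (peB h C l (B j + 1) * prB h A (B j + 1) / (peB h B j (B j) * peB h B j (B j + 1)) *
        (prB h D (C l) * peB h B j (C l) / (peB h C l (C l) * peB h C l (C l + 1))))
      - ∑ j, ∑ l, (peB h C l (B j) * prB h A (B j) / (peB h B j (B j - 1) * peB h B j (B j)) *
        (prB h D (C l - 1) * peB h B j (C l - 1) / (peB h C l (C l - 1) * peB h C l (C l))))
      = qbr h (∑ j, B j - ∑ j, A j - ∑ j, D j + ∑ j, C j - 1) := by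
  have hB1' : ∀ i l, i ≠ l → qbr h (B i - (B l - 1)) ≠ 0 := fun i l e => by
    rw [show B i - (B l - 1) = B i - B l + 1 by ring]; exact hB1 i l e
  have hC1' : ∀ i l, i ≠ l → qbr h (C i - (C l - 1)) ≠ 0 := fun i l e => by
    rw [show C i - (C l - 1) = C i - C l + 1 by ring]; exact hC1 i l e
  have hB2' : ∀ i l, i ≠ l → qbr h (B i - (B l + 1)) ≠ 0 := fun i l e => by
    rw [show B i - (B l + 1) = (B i - 1) - B l by ring]
    apply qbr_symm_ne
    rw [show B l - (B i - 1) = B l - B i + 1 by ring]; exact hB1 l i e.symm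
  have hC2' : ∀ i l, i ≠ l → qbr h (C i - (C l + 1)) ≠ 0 := fun i l e => by
    rw [show C i - (C l + 1) = (C i - 1) - C l by ring]
    apply qbr_symm_ne
    rw [show C l - (C i - 1) = C l - C i + 1 by ring]; exact hC1 l i e.symm
  have nb0 : ∀ j, peB h B j (B j) ≠ 0 := fun j =>
    Finset.prod_ne_zero_iff.2 fun i hi => hB0 _ _ (Finset.mem_erase.1 hi).1
  have nb1 : ∀ j, peB h B j (B j - 1) ≠ 0 := fun j =>
    Finset.prod_ne_zero_iff.2 fun i hi => hB1' _ _ (Finset.mem_erase.1 hi).1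
  have nb2 : ∀ j, peB h B j (B j + 1) ≠ 0 := fun j =>
    Finset.prod_ne_zero_iff.2 fun i hi => hB2' _ _ (Finset.mem_erase.1 hi).1
  have nc0 : ∀ j, peB h C j (C j) ≠ 0 := fun j =>
    Finset.prod_ne_zero_iff.2 fun i hi => hC0 _ _ (Finset.mem_erase.1 hi).1
  have nc1 : ∀ j, peB h C j (C j - 1) ≠ 0 := fun j =>
    Finset.prod_ne_zero_iff.2 fun i hi => hC1' _ _ (Finset.mem_erase.1 hi).1
  have nc2 : ∀ j, peB h C j (C j + 1) ≠ 0 := fun j =>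
    Finset.prod_ne_zero_iff.2 fun i hi => hC2' _ _ (Finset.mem_erase.1 hi).1
  have nd1 : ∀ j, prB h C (B j + 1) ≠ 0 := fun j =>
    Finset.prod_ne_zero_iff.2 fun i _ => hBC1 _ _
  have nd2 : ∀ j, prB h C (B j + 2) ≠ 0 := fun j =>
    Finset.prod_ne_zero_iff.2 fun i _ => hBC2 _ _
  have ne1 : ∀ l, prB h B (C l - 1) ≠ 0 := fun l =>
    Finset.prod_ne_zero_iff.2 fun i _ => by
      apply qbr_symm_ne
      rw [show C l - 1 - B i = C l - (B i + 1) by ring]; exact hBC1 _ _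
  have ne2 : ∀ l, prB h B (C l - 2) ≠ 0 := fun l =>
    Finset.prod_ne_zero_iff.2 fun i _ => by
      apply qbr_symm_ne
      rw [show C l - 2 - B i = C l - (B i + 2) by ring]; exact hBC2 _ _
  -- the mixed double residue
  let R : β → γ → ℂ := fun j l =>
    prB h C (B j + 1) * prB h A (B j + 1) / (peB h B j (B j) * peB h B j (B j + 1)) *
      (prB h D (C l - 1) * peB h B j (C l - 1) /
        (peB h C l (C l - 1) * peB h C l (C l) * qbr h (B j + 2 - C l)))
  have I1 : ∀ j, ∑ l, (peB h C l (B j + 1) * prB h A (B j + 1) /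
        (peB h B j (B j) * peB h B j (B j + 1)) *
        (prB h D (C l) * peB h B j (C l) / (peB h C l (C l) * peB h C l (C l + 1))))
      + ∑ l, R j l
      + prB h A (B j + 1) * prB h D (B j + 1) / (peB h B j (B j) * prB h C (B j + 2)) = 0 := by
    intro j
    have T := two_shift hh C (B j + 1) D B j (by omega) hC0 hC1 (fun i => hBC1 i j)
      (fun i => by rw [show C i - 1 - (B j + 1) = C i - (B j + 2) by ring]; exact hBC2 i j)
    have T' := congrArg (fun x => prB h C (B j + 1) * prB h A (B j + 1) /
      (peB h B j (B j) * peB h B j (B j + 1)) * x) T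
    simp only [mul_zero, mul_add, Finset.mul_sum] at T'
    rw [← T']
    congr 1
    · congr 1
      · refine Finset.sum_congr rfl fun l _ => ?_
        rw [prB_eq h C l (B j + 1), ← neg_sub (C l) (B j + 1), qbr_neg]
        have := nb0 j
        have := nb2 j
        have := nc0 l
        have := nc2 l
        have := hBC1 l j
        field_simp
      · refine Finset.sum_congr rfl fun l _ => ?_
        rw [show B j + 1 - (C l - 1) = B j + 2 - C l by ring]
    · rw [show B j + 1 + 1 = B j + 2 by ring]
      have := nb0 j
      have := nb2 j
      have := nd1 j
      have := nd2 j
      field_simp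
  have I2 : ∀ l, - ∑ j, R j l
      - ∑ j, (peB h C l (B j) * prB h A (B j) / (peB h B j (B j - 1) * peB h B j (B j)) *
        (prB h D (C l - 1) * peB h B j (C l - 1) / (peB h C l (C l - 1) * peB h C l (C l))))
      + prB h A (C l - 1) * prB h D (C l - 1) / (peB h C l (C l) * prB h B (C l - 2)) = 0 := by
    intro l
    have T := two_shift hh B (C l - 2) (fun i => A i - 1) (fun i => C i - 1) l (by omega) hB0 hB1
      (fun i => by
        apply qbr_symm_ne
        rw [show C l - 2 - B i = C l - (B i + 2) by ring]; exact hBC2 _ _)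
      (fun i => by
        apply qbr_symm_ne
        rw [show C l - 2 - (B i - 1) = C l - (B i + 1) by ring]; exact hBC1 _ _)
    simp only [prB_shift, peB_shift, sub_add_cancel] at T
    have T' := congrArg (fun x => prB h D (C l - 1) * prB h B (C l - 1) /
      (peB h C l (C l - 1) * peB h C l (C l)) * x) T
    simp only [mul_zero, mul_add, Finset.mul_sum] at T'
    rw [← T', sub_eq_add_neg, ← Finset.sum_neg_distrib, ← Finset.sum_neg_distrib]
    congr 1
    · congr 1
      · refine Finset.sum_congr rfl fun j _ => ?_
        simp only [R]
        rw [prB_eq h C l (B j + 1), prB_eq h B j (C l - 1),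
          show C l - 2 - B j = C l - (B j + 2) by ring, ← neg_sub (C l) (B j + 2), qbr_neg,
          show B j - (C l - 1) = -(C l - (B j + 1)) by ring, qbr_neg]
        have := nb0 j
        have := nb2 j
        have := nc0 l
        have := nc1 l
        have := hBC2 l j
        field_simp
      · refine Finset.sum_congr rfl fun j _ => ?_
        rw [prB_eq h B j (C l - 1),
          show C l - 2 - (B j - 1) = C l - (B j + 1) by ring,
          show B j - (C l - 1) = -(C l - (B j + 1)) by ring, qbr_neg]
        have := nb0 j
        have := nb1 j
        have := nc0 l
        have := nc1 l
        have := hBC1 l j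
        field_simp
    · rw [show C l - 2 + 1 = C l - 1 by ring]
      have := nc0 l
      have := nc1 l
      have := ne1 l
      have := ne2 l
      field_simp
  have I3 : ∑ j, prB h A (B j + 1) * prB h D (B j + 1) / (peB h B j (B j) * prB h C (B j + 2))
      + ∑ l, prB h A (C l - 1) * prB h D (C l - 1) / (peB h C l (C l) * prB h B (C l - 2))
      = - qbr h (∑ j, B j - ∑ j, A j - ∑ j, D j + ∑ j, C j - 1) := by
    have T := br_sum hh (ι := β ⊕ γ) (κ := α ⊕ δ) (by simp only [Fintype.card_sum]; omega)
      (Sum.elim B (fun i => C i - 2)) (Sum.elim (fun i => A i - 1) (fun i => D i - 1)) (by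
      rintro (a | a) (b | b) hab
      · exact hB0 a b (fun e => hab (by rw [e]))
      · apply qbr_symm_ne
        simp only [Sum.elim_inl, Sum.elim_inr]
        rw [show C b - 2 - B a = C b - (B a + 2) by ring]; exact hBC2 _ _
      · simp only [Sum.elim_inl, Sum.elim_inr]
        rw [show C a - 2 - B b = C a - (B b + 2) by ring]; exact hBC2 _ _
      · have := hC0 a b (fun e => hab (by rw [e]))
        simpa using this)
    have s1 : ∀ y, ∏ i, qbr h (A i - 1 - y) = prB h A (y + 1) := fun y => prB_shift h A 1 y
    have s2 : ∀ y, ∏ i, qbr h (D i - 1 - y) = prB h D (y + 1) := fun y => prB_shift h D 1 y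
    have s3 : ∀ y, ∏ i, qbr h (C i - 2 - y) = prB h C (y + 2) := fun y => prB_shift h C 2 y
    have s4 : ∀ y, ∏ i, qbr h (B i - y) = prB h B y := fun y => rfl
    have s5 : ∀ l y, (∏ i, if i = l then 1 else qbr h (C i - 2 - y)) = peB h C l (y + 2) :=
      fun l y => by rw [← peB_shift, ← peB_ite]
    simp only [Fintype.sum_sum_type, Fintype.prod_sum_type, Sum.elim_inl, Sum.elim_inr,
      Sum.inl.injEq, Sum.inr.injEq, reduceCtorEq, if_false] at T
    simp only [peB_ite h B, s1, s2, s3, s4, s5, sub_add_cancel] at T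
    rw [← qbr_neg]
    have c1 : (Fintype.card β : ℂ) = Fintype.card α + 1 := by exact_mod_cast hα.symm
    have c2 : (Fintype.card γ : ℂ) = Fintype.card β + 1 := by exact_mod_cast hγ
    have c3 : (Fintype.card δ : ℂ) = Fintype.card β + 2 := by exact_mod_cast hδ
    have arg : ∑ i, (A i - 1) + ∑ i, (D i - 1) - (∑ i, B i + ∑ i, (C i - 2))
        = -(∑ j, B j - ∑ j, A j - ∑ j, D j + ∑ j, C j - 1) := by
      simp only [Finset.sum_sub_distrib, Finset.sum_const, Finset.card_univ, nsmul_eq_mul]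
      rw [c2, c3, c1]; ring
    rw [arg] at T
    rw [← T]
    congr 1
    refine Finset.sum_congr rfl fun l _ => ?_
    rw [show C l - 2 + 1 = C l - 1 by ring, mul_comm (peB h C l (C l))]
  have J1 := Finset.sum_eq_zero (s := Finset.univ) (fun j _ => I1 j)
  have J2 := Finset.sum_eq_zero (s := Finset.univ) (fun l _ => I2 l)
  simp only [Finset.sum_add_distrib, Finset.sum_sub_distrib, Finset.sum_neg_distrib] at J1 J2
  rw [Finset.sum_comm (f := fun (l : γ) (j : β) => R j l)] at J2
  rw [Finset.sum_comm (f := fun (l : γ) (j : β) => _ * (prB h D (C l - 1) * peB h B j (C l - 1) /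
    (peB h C l (C l - 1) * peB h C l (C l))))] at J2
  linear_combination J1 + J2 - I3

theorem qbr_cont (h : ℂ) : Continuous (qbr h) := by
  unfold qbr
  fun_prop

theorem qbr_zero_countable {h : ℂ} (hh : Complex.exp h ≠ 1) (a : ℂ) :
    {e : ℂ | qbr h (a + e) = 0}.Countable := by
  refine (Set.countable_range (fun n : ℤ => n * (2 * Real.pi * Complex.I) / h - a)).mono ?_
  intro e he
  have h0 : h ≠ 0 := by rintro rfl; simp at hh
  have he' : qbr h (a + e) = 0 := he
  unfold qbr at he'
  rw [div_eq_zero_iff, or_iff_left (qbr_den_ne hh), sub_eq_zero] at he'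
  obtain ⟨n, hn⟩ := Complex.exp_eq_exp_iff_exists_int.1 he'
  refine ⟨n, ?_⟩
  have : h * (a + e) = n * (2 * Real.pi * Complex.I) := by linear_combination hn
  simp only
  rw [← this]
  field_simp
  ring

theorem core {h : ℂ} (hh : Complex.exp h ≠ 1) {α β γ δ : Type*}
    [Fintype α] [Fintype β] [Fintype γ] [Fintype δ] [DecidableEq β] [DecidableEq γ]
    (hα : Fintype.card α + 1 = Fintype.card β) (hγ : Fintype.card γ = Fintype.card β + 1)
    (hδ : Fintype.card δ = Fintype.card β + 2)
    (A : α → ℂ) (B : β → ℂ) (C : γ → ℂ) (D : δ → ℂ)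
    (hB0 : ∀ i l, i ≠ l → qbr h (B i - B l) ≠ 0)
    (hB1 : ∀ i l, i ≠ l → qbr h (B i - B l + 1) ≠ 0)
    (hC0 : ∀ i l, i ≠ l → qbr h (C i - C l) ≠ 0)
    (hC1 : ∀ i l, i ≠ l → qbr h (C i - C l + 1) ≠ 0) :
    ∑ j, ∑ l, (peB h C l (B j + 1) * prB h A (B j + 1) / (peB h B j (B j) * peB h B j (B j + 1)) *
        (prB h D (C l) * peB h B j (C l) / (peB h C l (C l) * peB h C l (C l + 1))))
      - ∑ j, ∑ l, (peB h C l (B j) * prB h A (B j) / (peB h B j (B j - 1) * peB h B j (B j)) *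
        (prB h D (C l - 1) * peB h B j (C l - 1) / (peB h C l (C l - 1) * peB h C l (C l))))
      = qbr h (∑ j, B j - ∑ j, A j - ∑ j, D j + ∑ j, C j - 1) := by
  let L : ℂ → ℂ := fun e =>
    ∑ j, ∑ l, (peB h C l (B j - e + 1) * prB h A (B j - e + 1) /
        (peB h B j (B j) * peB h B j (B j + 1)) *
        (prB h D (C l) * peB h B j (C l + e) / (peB h C l (C l) * peB h C l (C l + 1))))
      - ∑ j, ∑ l, (peB h C l (B j - e) * prB h A (B j - e) /
        (peB h B j (B j - 1) * peB h B j (B j)) *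
        (prB h D (C l - 1) * peB h B j (C l - 1 + e) /
          (peB h C l (C l - 1) * peB h C l (C l))))
  let Rr : ℂ → ℂ := fun e => qbr h (∑ j, (B j - e) - ∑ j, A j - ∑ j, D j + ∑ j, C j - 1)
  have hq := qbr_cont h
  have hL : Continuous L := by
    simp only [L, div_eq_mul_inv]
    refine Continuous.sub ?_ ?_
    · refine continuous_finsetSum _ fun j _ => continuous_finsetSum _ fun l _ => ?_
      generalize (peB h B j (B j) * peB h B j (B j + 1))⁻¹ = x
      generalize (peB h C l (C l) * peB h C l (C l + 1))⁻¹ = y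
      unfold peB prB
      fun_prop
    · refine continuous_finsetSum _ fun j _ => continuous_finsetSum _ fun l _ => ?_
      generalize (peB h B j (B j - 1) * peB h B j (B j))⁻¹ = x
      generalize (peB h C l (C l - 1) * peB h C l (C l))⁻¹ = y
      unfold peB prB
      fun_prop
  have hR : Continuous Rr := by
    simp only [Rr]
    fun_prop
  let bad : Set ℂ := ⋃ l : γ, ⋃ j : β,
    ({e | qbr h ((C l - (B j + 1)) + e) = 0} ∪ {e | qbr h ((C l - (B j + 2)) + e) = 0})
  have hbad : bad.Countable := Set.countable_iUnion fun l => Set.countable_iUnion fun j =>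
    (qbr_zero_countable hh _).union (qbr_zero_countable hh _)
  have hdense : Dense badᶜ := hbad.dense_compl ℂ
  have heq : L = Rr := by
    refine Continuous.ext_on hdense hL hR ?_
    intro e he
    have hne : ∀ l j, qbr h ((C l - (B j + 1)) + e) ≠ 0 ∧ qbr h ((C l - (B j + 2)) + e) ≠ 0 := by
      intro l j
      constructor
      · intro h0
        exact he (Set.mem_iUnion.2 ⟨l, Set.mem_iUnion.2 ⟨j, Or.inl h0⟩⟩)
      · intro h0
        exact he (Set.mem_iUnion.2 ⟨l, Set.mem_iUnion.2 ⟨j, Or.inr h0⟩⟩)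
    have K := core_generic hh hα hγ hδ A (fun j => B j - e) C D
      (fun i l hil => by rw [sub_sub_sub_cancel_right]; exact hB0 i l hil)
      (fun i l hil => by rw [sub_sub_sub_cancel_right]; exact hB1 i l hil) hC0 hC1
      (fun l j => by
        rw [show C l - (B j - e + 1) = (C l - (B j + 1)) + e by ring]; exact (hne l j).1)
      (fun l j => by
        rw [show C l - (B j - e + 2) = (C l - (B j + 2)) + e by ring]; exact (hne l j).2)
    have t1 : ∀ j, B j - e + 1 + e = B j + 1 := fun j => by ring
    have t2 : ∀ j, B j - e - 1 + e = B j - 1 := fun j => by ring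
    simp only [peB_shift h B, sub_add_cancel, t1, t2] at K
    exact K
  have := congrFun heq 0
  simpa only [L, Rr, sub_zero, add_zero] using this

theorem peB_fin (h : ℂ) (S : Finset ℤ) (f : ℤ → ℂ) (l : S) (y : ℂ) :
    peB h (fun i : S => f i) l y = ∏ i ∈ S.erase (l : ℤ), qbr h (f i - y) := by
  have : S.erase (l : ℤ) = (Finset.univ.erase l).map (Function.Embedding.subtype _) := by
    ext x
    simp only [Finset.mem_erase, Finset.mem_map, Finset.mem_univ, and_true,
      Function.Embedding.coe_subtype, Subtype.exists, exists_and_right, exists_eq_right]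
    constructor
    · rintro ⟨a, b⟩
      exact ⟨b, fun e => a (congrArg Subtype.val e)⟩
    · rintro ⟨b, a⟩
      exact ⟨fun e => a (Subtype.ext e), b⟩
  rw [this, Finset.prod_map]
  rfl

theorem prB_fin (h : ℂ) (S : Finset ℤ) (f : ℤ → ℂ) (y : ℂ) :
    prB h (fun i : S => f i) y = ∏ i ∈ S, qbr h (f i - y) :=
  Finset.prod_coe_sort S (fun i => qbr h (f i - y))


/-- Identity (23a).  `A i` stands for `L_{i,2k-2}`, `B i` for `L_{i,2k-1}`,
`C i` for `L_{i,2k}` and `D i` for `L_{i,2k+1}`. -/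
theorem identity_23a (h : ℂ) (hh : Complex.exp h ≠ 1) (k : ℤ) (hk : 1 ≤ k)
    (A B C D : ℤ → ℂ)
    (hB : ∀ i ∈ Finset.Icc (1 - k) (k - 1), ∀ j ∈ Finset.Icc (1 - k) (k - 1), i ≠ j →
      ∀ t ∈ ({-1, 0, 1} : Finset ℤ), qbr h (B i - B j + (t : ℂ)) ≠ 0)
    (hC : ∀ i ∈ Finset.Icc (-k) (k - 1), ∀ l ∈ Finset.Icc (-k) (k - 1), i ≠ l →
      ∀ t ∈ ({-1, 0, 1} : Finset ℤ), qbr h (C i - C l + (t : ℂ)) ≠ 0) :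
    ∑ s ∈ Finset.range 2, ∑ j ∈ Finset.Icc (1 - k) (k - 1), ∑ l ∈ Finset.Icc (-k) (k - 1),
      (-1 : ℂ) ^ s *
      (((∏ i ∈ (Finset.Icc (-k) (k - 1)).erase l, qbr h (C i - B j + (s : ℂ) - 1)) *
          ∏ i ∈ Finset.Icc (1 - k) (k - 2), qbr h (A i - B j + (s : ℂ) - 1)) /
        ∏ i ∈ (Finset.Icc (1 - k) (k - 1)).erase j,
          qbr h (B i - B j + (s : ℂ)) * qbr h (B i - B j + (s : ℂ) - 1)) *
      (((∏ i ∈ Finset.Icc (-k) k, qbr h (D i - C l + (s : ℂ))) *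
          ∏ i ∈ (Finset.Icc (1 - k) (k - 1)).erase j, qbr h (B i - C l + (s : ℂ))) /
        ∏ i ∈ (Finset.Icc (-k) (k - 1)).erase l,
          qbr h (C i - C l + (s : ℂ)) * qbr h (C i - C l + (s : ℂ) - 1))
    = qbr h ((∑ j ∈ Finset.Icc (-k + 1) (k - 1), B j)
        - (∑ j ∈ Finset.Icc (-k + 1) (k - 2), A j)
        - (∑ j ∈ Finset.Icc (-k) k, D j)
        + (∑ j ∈ Finset.Icc (-k) (k - 1), C j) - 1) := by
  classical
  have key := core hh (α := ↥(Finset.Icc (1 - k) (k - 2))) (β := ↥(Finset.Icc (1 - k) (k - 1)))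
    (γ := ↥(Finset.Icc (-k) (k - 1))) (δ := ↥(Finset.Icc (-k) k))
    (by simp only [Fintype.card_coe, Int.card_Icc]; omega)
    (by simp only [Fintype.card_coe, Int.card_Icc]; omega)
    (by simp only [Fintype.card_coe, Int.card_Icc]; omega)
    (fun i => A i) (fun i => B i) (fun i => C i) (fun i => D i)
    (fun i l hil => by
      have := hB i i.2 l l.2 (fun e => hil (Subtype.ext e)) 0 (by simp)
      simpa using this)
    (fun i l hil => by
      have := hB i i.2 l l.2 (fun e => hil (Subtype.ext e)) 1 (by simp)
      simpa using this)
    (fun i l hil => by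
      have := hC i i.2 l l.2 (fun e => hil (Subtype.ext e)) 0 (by simp)
      simpa using this)
    (fun i l hil => by
      have := hC i i.2 l l.2 (fun e => hil (Subtype.ext e)) 1 (by simp)
      simpa using this)
  have t1 : ∀ x y : ℂ, x - (y - 1) = x - y + 1 := fun x y => by ring
  have t2 : ∀ x y : ℂ, x - (y + 1) = x - y - 1 := fun x y => by ring
  simp only [peB_fin, prB_fin] at key
  rw [Finset.sum_coe_sort _ B, Finset.sum_coe_sort _ A, Finset.sum_coe_sort _ C,
    Finset.sum_coe_sort _ D] at key
  rw [show -k + 1 = 1 - k by ring, ← key, Finset.sum_range_succ, Finset.sum_range_one]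
  refine Eq.trans ?_ (sub_eq_add_neg _ _).symm
  rw [← Finset.sum_neg_distrib]
  congr 1
  · rw [← Finset.sum_coe_sort (Finset.Icc (1 - k) (k - 1))]
    refine Finset.sum_congr rfl fun j _ => ?_
    rw [← Finset.sum_coe_sort (Finset.Icc (-k) (k - 1))]
    refine Finset.sum_congr rfl fun l _ => ?_
    simp only [Nat.cast_zero, add_zero, pow_zero, one_mul, Finset.prod_mul_distrib, t1, t2]
  · rw [← Finset.sum_coe_sort (Finset.Icc (1 - k) (k - 1))]
    refine Finset.sum_congr rfl fun j _ => ?_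
    rw [← Finset.sum_coe_sort (Finset.Icc (-k) (k - 1)), ← Finset.sum_neg_distrib]
    refine Finset.sum_congr rfl fun l _ => ?_
    simp only [Nat.cast_one, pow_one, Finset.prod_mul_distrib, t1, add_sub_cancel_right]
    ring
end

section
/- Let q be a nonzero complex number with q² ≠ 1, let n ≥ 2 be an integer, and let A₁, …, A_{n−1}, B₁, …, B_n, C₁, …, C_{n+1}, D₁, …, D_{n−2} be complex numbers with all A_i and all B_i nonzero, such that for all i ≠ j in {1, …, n−1}: A_j ≠ A_i, A_j ≠ q²A_i and A_j ≠ q⁻²A_i, and for all i ≠ l in {1, …, n}: B_l ≠ B_i, B_l ≠ q²B_i and B_l ≠ q⁻²B_i. Then ∑_{j=1}^{n−1} ∑_{l=1}^{n} q · ( ∏_{i≠l, i=1}^{n} (A_j − q⁻²B_i) · ∏_{i=1}^{n−2} (A_j − q⁻²D_i) · ∏_{i=1}^{n+1} (B_l − C_i) · ∏_{i≠j, i=1}^{n−1} (B_l − A_i) ) / ( A_j B_l ∏_{i≠j, i=1}^{n−1} (A_j − A_i)(A_j − q⁻²A_i) · ∏_{i≠l, i=1}^{n} (B_l − B_i)(B_l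 − q⁻²B_i) ) − ∑_{j=1}^{n−1} ∑_{l=1}^{n} q⁻¹ · ( ∏_{i≠l, i=1}^{n} (A_j − B_i) · ∏_{i=1}^{n−2} (A_j − D_i) · ∏_{i=1}^{n+1} (B_l − q²C_i) · ∏_{i≠j, i=1}^{n−1} (B_l − q²A_i) ) / ( A_j B_l ∏_{i≠j, i=1}^{n−1} (A_j − A_i)(A_j − q²A_i) · ∏_{i≠l, i=1}^{n} (B_l − B_i)(B_l − q²B_i) ) − (q − q⁻¹) · ( 1 − q² · ( ∏_{i=1}^{n−2} D_i · ∏_{i=1}^{n+1} C_i ) / ( ∏_{i=1}^{n−1} A_i · ∏_{i=1}^{n} B_i ) ) = 0. (Identity (A21), the rational form of the key identities (23a) and (23b).) -/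
open Polynomial in
lemma lag3 (s t : Finset ℕ) (u v : ℕ → ℂ) (z : ℂ)
    (hu : ∀ i ∈ s, ∀ k ∈ s, i ≠ k → u i ≠ u k)
    (hv : ∀ i ∈ t, ∀ k ∈ t, i ≠ k → v i ≠ v k)
    (huv : ∀ i ∈ s, ∀ k ∈ t, u i ≠ v k)
    (huz : ∀ i ∈ s, u i ≠ z) (hvz : ∀ i ∈ t, v i ≠ z)
    (P : ℂ[X]) (hP : P.natDegree ≤ s.card + t.card) :
    ∑ i ∈ s, P.eval (u i) /
        ((∏ k ∈ s.erase i, (u i - u k)) * (∏ k ∈ t, (u i - v k)) * (u i - z))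
      + ∑ i ∈ t, P.eval (v i) /
        ((∏ k ∈ s, (v i - u k)) * (∏ k ∈ t.erase i, (v i - v k)) * (v i - z))
      + P.eval z / ((∏ k ∈ s, (z - u k)) * (∏ k ∈ t, (z - v k)))
      = P.coeff (s.card + t.card) := by
  classical
  let S : Finset ((ℕ ⊕ ℕ) ⊕ Unit) := (s.disjSum t).disjSum {()}
  let w : (ℕ ⊕ ℕ) ⊕ Unit → ℂ := Sum.elim (Sum.elim u v) (fun _ => z)
  have hinj : Set.InjOn w (S : Set ((ℕ ⊕ ℕ) ⊕ Unit)) := by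
    rintro ((i | i) | i) hi ((k | k) | k) hk h <;>
      simp [S, w] at hi hk h ⊢
    · by_contra hne; exact hu i hi k hk hne h
    · exact huv i hi k hk h
    · exact huz i hi h
    · exact huv k hk i hi h.symm
    · by_contra hne; exact hv i hi k hk hne h
    · exact hvz i hi h
    · exact huz k hk h.symm
    · exact hvz k hk h.symm
  have hcard : S.card = s.card + t.card + 1 := by simp [S]
  have hdeg : P.degree < S.card := by
    rw [hcard]
    refine lt_of_le_of_lt degree_le_natDegree ?_
    exact_mod_cast Nat.lt_succ_of_le hP
  have key := Lagrange.coeff_eq_sum hinj hdeg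
  have e1 : ∀ i, S.erase (Sum.inl (Sum.inl i)) = ((s.erase i).disjSum t).disjSum {()} := by
    intro i; ext ((k | k) | k) <;> simp [S]
  have e2 : ∀ i, S.erase (Sum.inl (Sum.inr i)) = (s.disjSum (t.erase i)).disjSum {()} := by
    intro i; ext ((k | k) | k) <;> simp [S]
  have e3 : S.erase (Sum.inr ()) = (s.disjSum t).disjSum ∅ := by
    ext ((k | k) | k) <;> simp [S]
  rw [hcard, Nat.add_sub_cancel] at key
  rw [key]
  simp only [S, Finset.sum_disjSum, Finset.sum_singleton]
  simp only [S] at e1 e2 e3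
  simp only [e1, e2, e3, Finset.prod_disjSum, Finset.prod_singleton, Finset.prod_empty, w,
    Sum.elim_inl, Sum.elim_inr, mul_one]

open Polynomial in
/-- `∏ (p x - A i)` as a polynomial in `x`. -/
noncomputable def linp (s : Finset ℕ) (A : ℕ → ℂ) (p : ℂ) : ℂ[X] :=
  ∏ i ∈ s, (C p * X - C (A i))

/-- `∏ (x - A i)`. -/
noncomputable def pr (s : Finset ℕ) (A : ℕ → ℂ) (x : ℂ) : ℂ := ∏ i ∈ s, (x - A i)

/-- `∏_{i ≠ j} (A j - A i)`. -/
noncomputable def dr (s : Finset ℕ) (A : ℕ → ℂ) (j : ℕ) : ℂ := ∏ i ∈ s.erase j, (A j - A i)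

lemma linp_eval (s A p x) : (linp s A p).eval x = pr s A (p * x) := by
  simp [linp, pr, Polynomial.eval_prod]

lemma linp_fac_deg (p a : ℂ) :
    (Polynomial.C p * Polynomial.X - Polynomial.C a).natDegree ≤ 1 := by
  compute_degree

lemma linp_deg (s A p) : (linp s A p).natDegree ≤ s.card := by
  refine (Polynomial.natDegree_prod_le _ _).trans ?_
  refine (Finset.sum_le_card_nsmul _ _ 1 fun i _ => linp_fac_deg _ _).trans (by simp)

lemma linp_coeff (s A p) : (linp s A p).coeff s.card = p ^ s.card := by
  have := Polynomial.coeff_prod_of_natDegree_le s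
    (fun i => (Polynomial.C p * Polynomial.X - Polynomial.C (A i))) 1 (fun i _ => linp_fac_deg _ _)
  rw [mul_one] at this
  rw [linp, this]
  simp [Polynomial.coeff_C]

lemma pr_ne {s A x} (h : ∀ i ∈ s, x ≠ A i) : pr s A x ≠ 0 :=
  Finset.prod_ne_zero_iff.2 fun i hi => sub_ne_zero.2 (h i hi)

lemma dr_ne {s A j} (h : ∀ i ∈ s, j ≠ i → A j ≠ A i) : dr s A j ≠ 0 :=
  Finset.prod_ne_zero_iff.2 fun i hi => by
    rw [Finset.mem_erase] at hi
    exact sub_ne_zero.2 (h i hi.2 (Ne.symm hi.1))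

lemma prod_scale (s : Finset ℕ) (A : ℕ → ℂ) (p x : ℂ) (hp : p ≠ 0) :
    ∏ i ∈ s, (x - p⁻¹ * A i) = pr s A (p * x) / p ^ s.card := by
  rw [pr, eq_div_iff (pow_ne_zero _ hp), ← Finset.prod_const, ← Finset.prod_mul_distrib]
  refine Finset.prod_congr rfl fun i _ => ?_
  field_simp

lemma prod_scale' (s : Finset ℕ) (A : ℕ → ℂ) (p x : ℂ) (hp : p ≠ 0) :
    ∏ i ∈ s, (x - p * A i) = pr s A (p⁻¹ * x) * p ^ s.card := by
  rw [pr, ← Finset.prod_const, ← Finset.prod_mul_distrib]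
  refine Finset.prod_congr rfl fun i _ => ?_
  field_simp

lemma pr_erase {s : Finset ℕ} (A : ℕ → ℂ) (x : ℂ) {j} (hj : j ∈ s) :
    pr s A x = (x - A j) * pr (s.erase j) A x := by
  rw [pr, pr, Finset.mul_prod_erase s (fun i => x - A i) hj]

lemma dr_scale (s : Finset ℕ) (A : ℕ → ℂ) (p : ℂ) (hp : p ≠ 0) {j} (hj : j ∈ s) :
    ∏ i ∈ s.erase j, (p⁻¹ * A j - p⁻¹ * A i) = dr s A j * p / p ^ s.card := by
  rw [prod_scale _ _ _ _ hp, mul_inv_cancel_left₀ hp, Finset.card_erase_of_mem hj, pr, dr]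
  obtain ⟨k, hk⟩ : ∃ k, s.card = k + 1 := ⟨s.card - 1, by
    have := Finset.card_pos.2 ⟨j, hj⟩; omega⟩
  rw [hk, Nat.add_sub_cancel, pow_succ]
  field_simp

lemma K1 (s t u : Finset ℕ) (A B C : ℕ → ℂ) (p x : ℂ) (hp : p ≠ 0)
    (hc : u.card + s.card = t.card + t.card)
    (hB : ∀ i ∈ t, ∀ k ∈ t, i ≠ k → B i ≠ B k)
    (hB' : ∀ i ∈ t, ∀ k ∈ t, B i ≠ p⁻¹ * B k)
    (hx : ∀ i ∈ t, B i ≠ x) (hx' : ∀ i ∈ t, p⁻¹ * B i ≠ x) :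
    ∑ l ∈ t, pr u C (B l) * pr s A (B l) / (dr t B l * pr t B (p * B l)) / (B l - x)
    + ∑ l ∈ t, pr u C (p⁻¹ * B l) * pr s A (p⁻¹ * B l) / (dr t B l * pr t B (p⁻¹ * B l))
        / (B l - p * x)
    + pr u C x * pr s A x / (pr t B x * pr t B (p * x)) = (p ^ t.card)⁻¹ := by
  have h := lag3 t t B (fun i => p⁻¹ * B i) x hB
    (fun i hi k hk hik e => hB i hi k hk hik (mul_left_cancel₀ (inv_ne_zero hp) e))
    hB' hx hx' (linp u C 1 * linp s A 1)
    (by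
      refine Polynomial.natDegree_mul_le.trans ?_
      rw [← hc]; exact add_le_add (linp_deg _ _ _) (linp_deg _ _ _))
  rw [← hc, Polynomial.coeff_mul_add_eq_of_natDegree_le (linp_deg _ _ _) (linp_deg _ _ _),
    linp_coeff, linp_coeff] at h
  simp only [Polynomial.eval_mul, linp_eval, one_mul, one_pow, mul_one, prod_scale _ _ _ _ hp] at h
  have hpn := pow_ne_zero t.card hp
  rw [← mul_one (p ^ t.card)⁻¹, ← h, mul_add, mul_add, Finset.mul_sum, Finset.mul_sum]
  congr 1
  · congr 1
    · refine Finset.sum_congr rfl fun l hl => ?_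
      have : dr t B l = ∏ i ∈ t.erase l, (B l - B i) := rfl
      rw [← this]
      field_simp
    · refine Finset.sum_congr rfl fun l hl => ?_
      rw [← prod_scale _ _ _ _ hp, dr_scale _ _ _ hp hl]
      have : ∏ i ∈ t, (p⁻¹ * B l - B i) = pr t B (p⁻¹ * B l) := rfl
      rw [this]
      have e : p⁻¹ * B l - x = (B l - p * x) / p := by field_simp
      rw [e]
      field_simp
  · have : ∏ i ∈ t, (x - B i) = pr t B x := rfl
    rw [this]
    field_simp

lemma K2 (s t w : Finset ℕ) (A B D : ℕ → ℂ) (p : ℂ) (hp : p ≠ 0) (hp1 : p ≠ 1)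
    (l : ℕ) (hl : l ∈ t) (hc : t.card + w.card = s.card + s.card)
    (hA : ∀ i ∈ s, ∀ k ∈ s, i ≠ k → A i ≠ A k)
    (hA' : ∀ i ∈ s, ∀ k ∈ s, A i ≠ p⁻¹ * A k)
    (hB0 : B l ≠ 0)
    (h1 : ∀ j ∈ s, A j ≠ B l) (h2 : ∀ j ∈ s, A j ≠ p * B l) (h3 : ∀ j ∈ s, p * A j ≠ B l) :
    ∑ j ∈ s, pr t B (p * A j) * pr w D (p * A j) / (dr s A j * pr s A (p * A j))
        / ((p * A j - B l) * (A j - B l))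
    + ∑ j ∈ s, pr t B (A j) * pr w D (A j) / (dr s A j * pr s A (p⁻¹ * A j))
        / ((A j - B l) * (A j - p * B l))
    + pr t B (p * B l) * pr w D (p * B l) / ((p - 1) * B l * (pr s A (B l) * pr s A (p * B l)))
      = 0 := by
  have hd : (linp (t.erase l) B p * linp w D p).natDegree < s.card + s.card := by
    refine lt_of_le_of_lt Polynomial.natDegree_mul_le ?_
    have e1 := linp_deg (t.erase l) B p
    have e2 := linp_deg w D p
    rw [Finset.card_erase_of_mem hl] at e1
    have := Finset.card_pos.2 ⟨l, hl⟩
    omega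
  have h := lag3 s s A (fun i => p⁻¹ * A i) (B l) hA
    (fun i hi k hk hik e => hA i hi k hk hik (mul_left_cancel₀ (inv_ne_zero hp) e))
    hA' h1 (fun i hi e => h2 i hi (by rw [← e]; field_simp)) _ hd.le
  rw [Polynomial.coeff_eq_zero_of_natDegree_lt hd] at h
  simp only [Polynomial.eval_mul, linp_eval, prod_scale _ _ _ _ hp] at h
  have hpn := pow_ne_zero s.card hp
  rw [← mul_zero (p ^ s.card)⁻¹, ← h, mul_add, mul_add, Finset.mul_sum, Finset.mul_sum]
  congr 1
  · congr 1
    · refine Finset.sum_congr rfl fun j hj => ?_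
      have : dr s A j = ∏ i ∈ s.erase j, (A j - A i) := rfl
      rw [← this, pr_erase B _ hl]
      have := sub_ne_zero.2 (h3 j hj)
      field_simp
    · refine Finset.sum_congr rfl fun j hj => ?_
      rw [← prod_scale _ _ _ _ hp, dr_scale _ _ _ hp hj, mul_inv_cancel_left₀ hp]
      have : ∏ i ∈ s, (p⁻¹ * A j - A i) = pr s A (p⁻¹ * A j) := rfl
      rw [this, pr_erase B _ hl]
      have := sub_ne_zero.2 (h1 j hj)
      have e : p⁻¹ * A j - B l = (A j - p * B l) / p := by field_simp
      rw [e]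
      field_simp
  · have : ∏ i ∈ s, (B l - A i) = pr s A (B l) := rfl
    rw [this, pr_erase B _ hl]
    have := sub_ne_zero.2 hp1
    have e : p * B l - B l = (p - 1) * B l := by ring
    rw [e]
    field_simp

lemma K3 (s t u w : Finset ℕ) (A B C D : ℕ → ℂ) (p : ℂ) (hp : p ≠ 0)
    (hc : u.card + w.card = s.card + t.card) (hw : s.card = w.card + 1)
    (hA : ∀ i ∈ s, ∀ k ∈ s, i ≠ k → A i ≠ A k)
    (hB : ∀ i ∈ t, ∀ k ∈ t, i ≠ k → B i ≠ B k)
    (hA0 : ∀ i ∈ s, A i ≠ 0) (hB0 : ∀ i ∈ t, B i ≠ 0)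
    (h2 : ∀ j ∈ s, ∀ l ∈ t, A j ≠ p * B l) :
    ∑ j ∈ s, pr u C (p⁻¹ * A j) * pr w D (A j) / (A j * dr s A j * pr t B (p⁻¹ * A j))
    + ∑ l ∈ t, pr u C (B l) * pr w D (p * B l) / (B l * pr s A (p * B l) * dr t B l)
    + pr u C 0 * pr w D 0 / (pr s A 0 * pr t B 0) = p⁻¹ := by
  have h := lag3 s t (fun i => p⁻¹ * A i) B 0
    (fun i hi k hk hik e => hA i hi k hk hik (mul_left_cancel₀ (inv_ne_zero hp) e)) hB
    (fun i hi k hk e => h2 i hi k hk (by rw [← e]; field_simp))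
    (fun i hi => mul_ne_zero (inv_ne_zero hp) (hA0 i hi)) hB0
    (linp u C 1 * linp w D p)
    (by
      refine Polynomial.natDegree_mul_le.trans ?_
      rw [← hc]; exact add_le_add (linp_deg _ _ _) (linp_deg _ _ _))
  rw [← hc, Polynomial.coeff_mul_add_eq_of_natDegree_le (linp_deg _ _ _) (linp_deg _ _ _),
    linp_coeff, linp_coeff] at h
  simp only [Polynomial.eval_mul, linp_eval, one_mul, one_pow, prod_scale _ _ _ _ hp,
    mul_zero, sub_zero] at h
  have hpn := pow_ne_zero s.card hp
  have e : p⁻¹ = (p ^ s.card)⁻¹ * p ^ w.card := by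
    rw [hw, pow_succ]; field_simp
  refine Eq.trans ?_ e.symm
  rw [← h, mul_add, mul_add, Finset.mul_sum, Finset.mul_sum]
  congr 1
  · congr 1
    · refine Finset.sum_congr rfl fun j hj => ?_
      rw [← prod_scale _ _ _ _ hp, dr_scale _ _ _ hp hj, mul_inv_cancel_left₀ hp]
      have : ∏ i ∈ t, (p⁻¹ * A j - B i) = pr t B (p⁻¹ * A j) := rfl
      rw [this]
      field_simp
    · refine Finset.sum_congr rfl fun j hj => ?_
      have : dr t B j = ∏ i ∈ t.erase j, (B j - B i) := rfl
      rw [← this]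
      field_simp
  · have : ∏ i ∈ t, (0 - B i) = pr t B 0 := rfl
    rw [this]
    field_simp

lemma stepj (s t u : Finset ℕ) (A B C : ℕ → ℂ) (p : ℂ) (hp : p ≠ 0) (hp1 : p ≠ 1)
    (hc : u.card + s.card = t.card + t.card)
    (hB : ∀ i ∈ t, ∀ k ∈ t, i ≠ k → B i ≠ B k)
    (hB' : ∀ i ∈ t, ∀ k ∈ t, B i ≠ p⁻¹ * B k)
    (j : ℕ) (hj : j ∈ s) (hA0 : A j ≠ 0)
    (h1 : ∀ l ∈ t, A j ≠ B l) (h2 : ∀ l ∈ t, A j ≠ p * B l) (h3 : ∀ l ∈ t, p * A j ≠ B l) :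
    ∑ l ∈ t, pr u C (p⁻¹ * B l) * pr s A (p⁻¹ * B l) / (dr t B l * pr t B (p⁻¹ * B l))
        / ((p * A j - B l) * (B l - A j))
    = ∑ l ∈ t, pr u C (B l) * pr s A (B l) / (dr t B l * pr t B (p * B l))
        / ((B l - A j) * (p * B l - A j))
      - pr u C (p⁻¹ * A j) * pr s A (p⁻¹ * A j) / (pr t B (p⁻¹ * A j) * pr t B (A j))
        / ((p - 1) * A j) := by
  have k1 := K1 s t u A B C p (A j) hp hc hB hB' (fun l hl => (h1 l hl).symm)
    (fun l hl e => h3 l hl (by rw [← e]; field_simp))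
  have k2 := K1 s t u A B C p (p⁻¹ * A j) hp hc hB hB'
    (fun l hl e => h2 l hl (by rw [e]; field_simp))
    (fun l hl e => h1 l hl (mul_left_cancel₀ (inv_ne_zero hp) e).symm)
  have z : pr s A (A j) = 0 := by rw [pr_erase A _ hj, sub_self, zero_mul]
  rw [z, mul_zero, zero_div, add_zero] at k1
  rw [mul_inv_cancel_left₀ hp] at k2
  have hp1' := sub_ne_zero.2 hp1
  have e1 : ∑ l ∈ t, pr u C (p⁻¹ * B l) * pr s A (p⁻¹ * B l) / (dr t B l * pr t B (p⁻¹ * B l))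
        / ((p * A j - B l) * (B l - A j)) =
      (∑ l ∈ t, pr u C (p⁻¹ * B l) * pr s A (p⁻¹ * B l) / (dr t B l * pr t B (p⁻¹ * B l))
        / (B l - A j)
      - ∑ l ∈ t, pr u C (p⁻¹ * B l) * pr s A (p⁻¹ * B l) / (dr t B l * pr t B (p⁻¹ * B l))
        / (B l - p * A j)) / ((p - 1) * A j) := by
    rw [← Finset.sum_sub_distrib, Finset.sum_div]
    refine Finset.sum_congr rfl fun l hl => ?_
    generalize pr u C (p⁻¹ * B l) * pr s A (p⁻¹ * B l) / (dr t B l * pr t B (p⁻¹ * B l)) = G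
    have a1 : B l - A j ≠ 0 := sub_ne_zero.2 (h1 l hl).symm
    have a2 : B l - p * A j ≠ 0 := sub_ne_zero.2 (h3 l hl).symm
    have a3 : p * A j - B l ≠ 0 := sub_ne_zero.2 (h3 l hl)
    field_simp
    ring
  have e2 : ∑ l ∈ t, pr u C (B l) * pr s A (B l) / (dr t B l * pr t B (p * B l))
        / ((B l - A j) * (p * B l - A j)) =
      (∑ l ∈ t, pr u C (B l) * pr s A (B l) / (dr t B l * pr t B (p * B l)) / (B l - A j)
      - ∑ l ∈ t, pr u C (B l) * pr s A (B l) / (dr t B l * pr t B (p * B l))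
        / (B l - p⁻¹ * A j)) / ((p - 1) * A j) := by
    rw [← Finset.sum_sub_distrib, Finset.sum_div]
    refine Finset.sum_congr rfl fun l hl => ?_
    generalize pr u C (B l) * pr s A (B l) / (dr t B l * pr t B (p * B l)) = G
    have a1 : B l - A j ≠ 0 := sub_ne_zero.2 (h1 l hl).symm
    have a2 : p * B l - A j ≠ 0 := sub_ne_zero.2 (h2 l hl).symm
    have e : B l - p⁻¹ * A j = (p * B l - A j) / p := by field_simp
    have hy : p * B l - A j = p * (B l - A j) + (p - 1) * A j := by ring
    rw [e]
    generalize p * B l - A j = y at *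
    generalize B l - A j = x at *
    field_simp
    rw [hy]
    ring
  rw [e1, e2, ← sub_div]
  congr 1
  linear_combination k2 - k1

lemma core_s12 (s t u w : Finset ℕ) (A B C D : ℕ → ℂ) (p : ℂ) (hp : p ≠ 0) (hp1 : p ≠ 1)
    (ht : t.card = w.card + 2) (hs : s.card = w.card + 1) (hu : u.card = w.card + 3)
    (hA : ∀ i ∈ s, ∀ k ∈ s, i ≠ k → A i ≠ A k)
    (hA' : ∀ i ∈ s, ∀ k ∈ s, A i ≠ p⁻¹ * A k)
    (hB : ∀ i ∈ t, ∀ k ∈ t, i ≠ k → B i ≠ B k)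
    (hB' : ∀ i ∈ t, ∀ k ∈ t, B i ≠ p⁻¹ * B k)
    (hA0 : ∀ i ∈ s, A i ≠ 0) (hB0 : ∀ i ∈ t, B i ≠ 0)
    (h1 : ∀ j ∈ s, ∀ l ∈ t, A j ≠ B l) (h2 : ∀ j ∈ s, ∀ l ∈ t, A j ≠ p * B l)
    (h3 : ∀ j ∈ s, ∀ l ∈ t, p * A j ≠ B l) :
    ∑ j ∈ s, ∑ l ∈ t, pr t B (p * A j) * pr w D (p * A j) / (dr s A j * pr s A (p * A j)) *
      (pr u C (B l) * pr s A (B l) / (dr t B l * pr t B (p * B l))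
        / ((p * A j - B l) * (B l - A j)))
    - ∑ j ∈ s, ∑ l ∈ t, pr t B (A j) * pr w D (A j) / (dr s A j * pr s A (p⁻¹ * A j)) *
      (pr u C (p⁻¹ * B l) * pr s A (p⁻¹ * B l) / (dr t B l * pr t B (p⁻¹ * B l))
        / ((p * A j - B l) * (B l - A j)))
    = (p⁻¹ - pr u C 0 * pr w D 0 / (pr s A 0 * pr t B 0)) / (p - 1) := by
  have hp1' := sub_ne_zero.2 hp1
  have k3 := K3 s t u w A B C D p hp (by omega) hs hA hB hA0 hB0 h2
  rw [sub_eq_of_eq_add k3.symm, add_div, Finset.sum_div, Finset.sum_div]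
  have E : ∀ j ∈ s, ∑ l ∈ t, pr t B (A j) * pr w D (A j) / (dr s A j * pr s A (p⁻¹ * A j)) *
      (pr u C (p⁻¹ * B l) * pr s A (p⁻¹ * B l) / (dr t B l * pr t B (p⁻¹ * B l))
        / ((p * A j - B l) * (B l - A j))) =
      ∑ l ∈ t, pr t B (A j) * pr w D (A j) / (dr s A j * pr s A (p⁻¹ * A j)) *
        (pr u C (B l) * pr s A (B l) / (dr t B l * pr t B (p * B l))
        / ((B l - A j) * (p * B l - A j)))
      - pr u C (p⁻¹ * A j) * pr w D (A j) / (A j * dr s A j * pr t B (p⁻¹ * A j)) / (p - 1) := by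
    intro j hj
    rw [← Finset.mul_sum, stepj s t u A B C p hp hp1 (by omega) hB hB' j hj (hA0 j hj) (h1 j hj)
      (h2 j hj) (h3 j hj), mul_sub, Finset.mul_sum]
    congr 1
    have n1 : pr t B (A j) ≠ 0 := pr_ne (h1 j hj)
    have n2 : pr s A (p⁻¹ * A j) ≠ 0 := pr_ne fun i hi => (hA' i hi j hj).symm
    have n3 := hA0 j hj
    generalize pr s A (p⁻¹ * A j) = Y at *
    generalize pr u C (p⁻¹ * A j) = Y1 at *
    generalize pr t B (p⁻¹ * A j) = Y2 at *
    field_simp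
  rw [Finset.sum_congr rfl E, Finset.sum_sub_distrib, sub_sub_eq_add_sub, add_sub_right_comm,
    add_comm]
  congr 1
  rw [Finset.sum_comm, Finset.sum_comm (s := s) (t := t), ← Finset.sum_sub_distrib]
  refine Finset.sum_congr rfl fun l hl => ?_
  have k2 := K2 s t w A B D p hp hp1 l hl (by omega) hA hA' (hB0 l hl) (fun j hj => h1 j hj l hl)
    (fun j hj => h2 j hj l hl) (fun j hj => h3 j hj l hl)
  have n1 : pr s A (B l) ≠ 0 := pr_ne fun j hj => (h1 j hj l hl).symm
  have n2 : pr t B (p * B l) ≠ 0 := pr_ne fun i hi e => hB' l hl i hi (by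
    rw [← e]; field_simp)
  have r : pr u C (B l) * pr w D (p * B l) / (B l * pr s A (p * B l) * dr t B l) / (p - 1)
      = pr u C (B l) * pr s A (B l) / (dr t B l * pr t B (p * B l)) *
        (pr t B (p * B l) * pr w D (p * B l) /
          ((p - 1) * B l * (pr s A (B l) * pr s A (p * B l)))) := by
    field_simp
  rw [r, eq_neg_of_add_eq_zero_right k2, mul_neg, mul_add, Finset.mul_sum, Finset.mul_sum,
    neg_add, ← Finset.sum_neg_distrib, ← Finset.sum_neg_distrib, sub_eq_add_neg,
    ← Finset.sum_neg_distrib]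
  congr 1
  · refine Finset.sum_congr rfl fun j hj => ?_
    rw [← neg_sub (B l) (A j), mul_neg, div_neg]
    ring
  · refine Finset.sum_congr rfl fun j hj => ?_
    rw [← neg_sub (B l) (A j), ← neg_sub (p * B l) (A j), neg_mul_neg]
    ring

/-- The left-hand side of the identity over general index sets. -/
noncomputable def lhsA21 (q : ℂ) (s t u w : Finset ℕ) (A B C D : ℕ → ℂ) : ℂ :=
    (∑ j ∈ s, ∑ l ∈ t,
      q * ((∏ i ∈ t.erase l, (A j - (q ^ 2)⁻¹ * B i)) *
            (∏ i ∈ w, (A j - (q ^ 2)⁻¹ * D i)) *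
            (∏ i ∈ u, (B l - C i)) *
            ∏ i ∈ s.erase j, (B l - A i)) /
          (A j * B l *
            (∏ i ∈ s.erase j, (A j - A i) * (A j - (q ^ 2)⁻¹ * A i)) *
            ∏ i ∈ t.erase l, (B l - B i) * (B l - (q ^ 2)⁻¹ * B i)))
    - (∑ j ∈ s, ∑ l ∈ t,
      q⁻¹ * ((∏ i ∈ t.erase l, (A j - B i)) *
            (∏ i ∈ w, (A j - D i)) *
            (∏ i ∈ u, (B l - q ^ 2 * C i)) *
            ∏ i ∈ s.erase j, (B l - q ^ 2 * A i)) /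
          (A j * B l *
            (∏ i ∈ s.erase j, (A j - A i) * (A j - q ^ 2 * A i)) *
            ∏ i ∈ t.erase l, (B l - B i) * (B l - q ^ 2 * B i)))
    - (q - q⁻¹) * (1 - q ^ 2 *
        ((∏ i ∈ w, D i) * ∏ i ∈ u, C i) /
        ((∏ i ∈ s, A i) * ∏ i ∈ t, B i))

lemma T1 (q p : ℂ) (s t u w : Finset ℕ) (A B C D : ℕ → ℂ) (hp : p ≠ 0) (hp1 : p ≠ 1)
    (ht : t.card = w.card + 2) (hs : s.card = w.card + 1)
    {j l : ℕ} (hj : j ∈ s) (hl : l ∈ t) (hA0 : A j ≠ 0) (hB0 : B l ≠ 0)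
    (h1 : A j ≠ B l) (h3 : p * A j ≠ B l) :
    q * ((∏ i ∈ t.erase l, (A j - p⁻¹ * B i)) *
            (∏ i ∈ w, (A j - p⁻¹ * D i)) *
            (∏ i ∈ u, (B l - C i)) *
            ∏ i ∈ s.erase j, (B l - A i)) /
          (A j * B l *
            (∏ i ∈ s.erase j, (A j - A i) * (A j - p⁻¹ * A i)) *
            ∏ i ∈ t.erase l, (B l - B i) * (B l - p⁻¹ * B i))
    = q * (p - 1) ^ 2 *
      (pr t B (p * A j) * pr w D (p * A j) / (dr s A j * pr s A (p * A j)) *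
      (pr u C (B l) * pr s A (B l) / (dr t B l * pr t B (p * B l))
        / ((p * A j - B l) * (B l - A j)))) := by
  rw [Finset.prod_mul_distrib, Finset.prod_mul_distrib]
  simp only [prod_scale _ _ _ _ hp, Finset.card_erase_of_mem hj, Finset.card_erase_of_mem hl,
    ht, hs]
  have d1 : ∏ i ∈ u, (B l - C i) = pr u C (B l) := rfl
  have d2 : ∏ i ∈ s.erase j, (B l - A i) = pr (s.erase j) A (B l) := rfl
  have d3 : ∏ i ∈ s.erase j, (A j - A i) = dr s A j := rfl
  have d4 : ∏ i ∈ t.erase l, (B l - B i) = dr t B l := rfl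
  rw [d1, d2, d3, d4, pr_erase B (p * A j) hl, pr_erase A (p * A j) hj, pr_erase A (B l) hj,
    pr_erase B (p * B l) hl]
  have a1 : p * A j - B l ≠ 0 := sub_ne_zero.2 h3
  have a2 : B l - A j ≠ 0 := sub_ne_zero.2 h1.symm
  have a3 : p - 1 ≠ 0 := sub_ne_zero.2 hp1
  have e1 : p * A j - A j = (p - 1) * A j := by ring
  have e2 : p * B l - B l = (p - 1) * B l := by ring
  have e3 : w.card + 1 - 1 = w.card := by omega
  have e4 : w.card + 2 - 1 = w.card + 1 := by omega
  rw [e1, e2, e3, e4]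
  generalize p * A j - B l = z1 at *
  generalize B l - A j = z2 at *
  generalize p - 1 = z3 at *
  generalize pr _ _ _ = y1 at *
  generalize pr _ _ _ = y2 at *
  generalize pr _ _ _ = y3 at *
  generalize pr _ _ _ = y4 at *
  generalize pr _ _ _ = y5 at *
  generalize pr _ _ _ = y6 at *
  field_simp

lemma T2 (q p : ℂ) (s t u w : Finset ℕ) (A B C D : ℕ → ℂ) (hq : q ≠ 0) (hpq : p = q ^ 2)
    (hp : p ≠ 0) (hp1 : p ≠ 1)
    (ht : t.card = w.card + 2) (hs : s.card = w.card + 1) (hu : u.card = w.card + 3)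
    {j l : ℕ} (hj : j ∈ s) (hl : l ∈ t) (hA0 : A j ≠ 0) (hB0 : B l ≠ 0)
    (h1 : A j ≠ B l) (h3 : p * A j ≠ B l) :
    q⁻¹ * ((∏ i ∈ t.erase l, (A j - B i)) *
            (∏ i ∈ w, (A j - D i)) *
            (∏ i ∈ u, (B l - p * C i)) *
            ∏ i ∈ s.erase j, (B l - p * A i)) /
          (A j * B l *
            (∏ i ∈ s.erase j, (A j - A i) * (A j - p * A i)) *
            ∏ i ∈ t.erase l, (B l - B i) * (B l - p * B i))
    = q * (p - 1) ^ 2 *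
      (pr t B (A j) * pr w D (A j) / (dr s A j * pr s A (p⁻¹ * A j)) *
      (pr u C (p⁻¹ * B l) * pr s A (p⁻¹ * B l) / (dr t B l * pr t B (p⁻¹ * B l))
        / ((p * A j - B l) * (B l - A j)))) := by
  rw [Finset.prod_mul_distrib, Finset.prod_mul_distrib]
  simp only [prod_scale' _ _ _ _ hp, Finset.card_erase_of_mem hj, Finset.card_erase_of_mem hl,
    ht, hs, hu]
  have d1 : ∏ i ∈ w, (A j - D i) = pr w D (A j) := rfl
  have d2 : ∏ i ∈ t.erase l, (A j - B i) = pr (t.erase l) B (A j) := rfl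
  have d3 : ∏ i ∈ s.erase j, (A j - A i) = dr s A j := rfl
  have d4 : ∏ i ∈ t.erase l, (B l - B i) = dr t B l := rfl
  rw [d1, d2, d3, d4, pr_erase B (A j) hl, pr_erase A (p⁻¹ * A j) hj, pr_erase A (p⁻¹ * B l) hj,
    pr_erase B (p⁻¹ * B l) hl]
  have a1 : p * A j - B l ≠ 0 := sub_ne_zero.2 h3
  have a2 : B l - A j ≠ 0 := sub_ne_zero.2 h1.symm
  have a3 : p - 1 ≠ 0 := sub_ne_zero.2 hp1
  have e1 : p⁻¹ * A j - A j = -((p - 1) * A j / p) := by field_simp; ring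
  have e2 : p⁻¹ * B l - B l = -((p - 1) * B l / p) := by field_simp; ring
  have e3 : w.card + 1 - 1 = w.card := by omega
  have e4 : w.card + 2 - 1 = w.card + 1 := by omega
  have e5 : p⁻¹ * B l - A j = -((p * A j - B l) / p) := by field_simp; ring
  have e6 : A j - B l = - (B l - A j) := by ring
  have e7 : q⁻¹ = q / p := by rw [hpq]; field_simp
  rw [e1, e2, e3, e4, e5, e6, e7]
  clear hpq
  generalize p * A j - B l = z1 at *
  generalize B l - A j = z2 at *
  generalize p - 1 = z3 at *
  generalize pr _ _ _ = y1 at *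
  generalize pr _ _ _ = y2 at *
  generalize pr _ _ _ = y3 at *
  generalize pr _ _ _ = y4 at *
  generalize pr _ _ _ = y5 at *
  generalize pr _ _ _ = y6 at *
  field_simp
  ring

lemma pr_zero (s : Finset ℕ) (A : ℕ → ℂ) : pr s A 0 = (-1) ^ s.card * ∏ i ∈ s, A i := by
  simp [pr, Finset.prod_neg]

lemma generic (q : ℂ) (s t u w : Finset ℕ) (A B C D : ℕ → ℂ) (hq : q ≠ 0) (hq2 : q ^ 2 ≠ 1)
    (ht : t.card = w.card + 2) (hs : s.card = w.card + 1) (hu : u.card = w.card + 3)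
    (hA : ∀ i ∈ s, ∀ k ∈ s, i ≠ k → A i ≠ A k)
    (hA' : ∀ i ∈ s, ∀ k ∈ s, A i ≠ (q ^ 2)⁻¹ * A k)
    (hB : ∀ i ∈ t, ∀ k ∈ t, i ≠ k → B i ≠ B k)
    (hB' : ∀ i ∈ t, ∀ k ∈ t, B i ≠ (q ^ 2)⁻¹ * B k)
    (hA0 : ∀ i ∈ s, A i ≠ 0) (hB0 : ∀ i ∈ t, B i ≠ 0)
    (h1 : ∀ j ∈ s, ∀ l ∈ t, A j ≠ B l) (h2 : ∀ j ∈ s, ∀ l ∈ t, A j ≠ q ^ 2 * B l)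
    (h3 : ∀ j ∈ s, ∀ l ∈ t, q ^ 2 * A j ≠ B l) :
    lhsA21 q s t u w A B C D = 0 := by
  have hp : q ^ 2 ≠ 0 := pow_ne_zero _ hq
  have co := core_s12 s t u w A B C D (q ^ 2) hp hq2 ht hs hu hA hA' hB hB' hA0 hB0 h1 h2 h3
  unfold lhsA21
  rw [Finset.sum_congr rfl fun j hj => Finset.sum_congr rfl fun l hl =>
      T1 q (q ^ 2) s t u w A B C D hp hq2 ht hs hj hl (hA0 j hj) (hB0 l hl) (h1 j hj l hl)
        (h3 j hj l hl),
    Finset.sum_congr rfl fun j hj => Finset.sum_congr rfl fun l hl =>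
      T2 q (q ^ 2) s t u w A B C D hq rfl hp hq2 ht hs hu hj hl (hA0 j hj) (hB0 l hl)
        (h1 j hj l hl) (h3 j hj l hl)]
  simp only [← Finset.mul_sum] at co ⊢
  rw [← mul_sub, co]
  simp only [pr_zero]
  have f1 : ∏ i ∈ s, A i ≠ 0 := Finset.prod_ne_zero_iff.2 hA0
  have f2 : ∏ i ∈ t, B i ≠ 0 := Finset.prod_ne_zero_iff.2 hB0
  have a3 : q ^ 2 - 1 ≠ 0 := sub_ne_zero.2 hq2
  have g : ((-1 : ℂ) ^ u.card * ∏ i ∈ u, C i) * ((-1) ^ w.card * ∏ i ∈ w, D i) /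
      (((-1) ^ s.card * ∏ i ∈ s, A i) * ((-1) ^ t.card * ∏ i ∈ t, B i)) =
      ((∏ i ∈ w, D i) * ∏ i ∈ u, C i) / ((∏ i ∈ s, A i) * ∏ i ∈ t, B i) := by
    rw [ht, hs, hu]
    have : (-1 : ℂ) ^ w.card ≠ 0 := pow_ne_zero _ (by norm_num)
    simp only [pow_add]
    field_simp
    try ring
  rw [g, mul_div_assoc]
  generalize ((∏ i ∈ w, D i) * ∏ i ∈ u, C i) / ((∏ i ∈ s, A i) * ∏ i ∈ t, B i) = X
  field_simp
  ring

open Filter Topology in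
theorem general (q : ℂ) (s t u w : Finset ℕ) (A B C D : ℕ → ℂ) (hq : q ≠ 0) (hq2 : q ^ 2 ≠ 1)
    (ht : t.card = w.card + 2) (hs : s.card = w.card + 1) (hu : u.card = w.card + 3)
    (hA0 : ∀ i ∈ s, A i ≠ 0) (hB0 : ∀ i ∈ t, B i ≠ 0)
    (hAA : ∀ j ∈ s, ∀ i ∈ s, j ≠ i →
      A j ≠ A i ∧ A j ≠ q ^ 2 * A i ∧ A j ≠ (q ^ 2)⁻¹ * A i)
    (hBB : ∀ l ∈ t, ∀ i ∈ t, l ≠ i →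
      B l ≠ B i ∧ B l ≠ q ^ 2 * B i ∧ B l ≠ (q ^ 2)⁻¹ * B i) :
    lhsA21 q s t u w A B C D = 0 := by
  have hp : q ^ 2 ≠ 0 := pow_ne_zero _ hq
  have hself : ∀ x : ℂ, x ≠ 0 → x ≠ (q ^ 2)⁻¹ * x := by
    intro x hx e
    apply hq2
    field_simp at e
    exact e
  let Bt : ℂ → ℕ → ℂ := fun r i => r * B i
  have hBt : Bt 1 = B := by funext i; simp [Bt]
  have hcont : ContinuousAt (fun r => lhsA21 q s t u w A (Bt r) C D) 1 := by
    have cB : ∀ i, ContinuousAt (fun r => Bt r i) 1 := fun i => by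
      simp only [Bt]; fun_prop
    have hB1 : ∀ i, Bt 1 i = B i := fun i => by simp [Bt]
    unfold lhsA21
    refine ContinuousAt.sub (ContinuousAt.sub ?_ ?_) ?_
    · refine tendsto_finsetSum _ fun j hj => tendsto_finsetSum _ fun l hl => ?_
      refine ContinuousAt.div (by fun_prop) (by fun_prop) ?_
      simp only [hB1]
      refine mul_ne_zero (mul_ne_zero (mul_ne_zero (hA0 j hj) (hB0 l hl)) ?_) ?_
      · refine Finset.prod_ne_zero_iff.2 fun i hi => ?_
        obtain ⟨hi1, hi2⟩ := Finset.mem_erase.1 hi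
        obtain ⟨x1, x2, x3⟩ := hAA j hj i hi2 hi1.symm
        exact mul_ne_zero (sub_ne_zero.2 x1) (sub_ne_zero.2 x3)
      · refine Finset.prod_ne_zero_iff.2 fun i hi => ?_
        obtain ⟨hi1, hi2⟩ := Finset.mem_erase.1 hi
        obtain ⟨x1, x2, x3⟩ := hBB l hl i hi2 hi1.symm
        exact mul_ne_zero (sub_ne_zero.2 x1) (sub_ne_zero.2 x3)
    · refine tendsto_finsetSum _ fun j hj => tendsto_finsetSum _ fun l hl => ?_
      refine ContinuousAt.div (by fun_prop) (by fun_prop) ?_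
      simp only [hB1]
      refine mul_ne_zero (mul_ne_zero (mul_ne_zero (hA0 j hj) (hB0 l hl)) ?_) ?_
      · refine Finset.prod_ne_zero_iff.2 fun i hi => ?_
        obtain ⟨hi1, hi2⟩ := Finset.mem_erase.1 hi
        obtain ⟨x1, x2, x3⟩ := hAA j hj i hi2 hi1.symm
        exact mul_ne_zero (sub_ne_zero.2 x1) (sub_ne_zero.2 x2)
      · refine Finset.prod_ne_zero_iff.2 fun i hi => ?_
        obtain ⟨hi1, hi2⟩ := Finset.mem_erase.1 hi
        obtain ⟨x1, x2, x3⟩ := hBB l hl i hi2 hi1.symm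
        exact mul_ne_zero (sub_ne_zero.2 x1) (sub_ne_zero.2 x2)
    · refine ContinuousAt.mul (by fun_prop) (ContinuousAt.sub (by fun_prop) ?_)
      refine ContinuousAt.div (by fun_prop) (by fun_prop) ?_
      simp only [hB1]
      exact mul_ne_zero (Finset.prod_ne_zero_iff.2 hA0) (Finset.prod_ne_zero_iff.2 hB0)
  -- the finitely many bad scalings
  have hne : ∀ a : ℂ, ∀ᶠ r in 𝓝[≠] (1 : ℂ), r ≠ a := by
    intro a
    rcases eq_or_ne a 1 with rfl | ha
    · exact self_mem_nhdsWithin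
    · exact mem_nhdsWithin_of_mem_nhds (isOpen_ne.mem_nhds ha.symm)
  have hall : ∀ᶠ r in 𝓝[≠] (1 : ℂ), ∀ j ∈ s, ∀ l ∈ t,
      r ≠ A j / B l ∧ r ≠ A j / (q ^ 2 * B l) ∧ r ≠ q ^ 2 * A j / B l := by
    refine (Finset.eventually_all s).2 fun j _ => (Finset.eventually_all t).2 fun l _ => ?_
    exact (hne _).and ((hne _).and (hne _))
  have hzero : ∀ᶠ r in 𝓝[≠] (1 : ℂ), lhsA21 q s t u w A (Bt r) C D = 0 := by
    filter_upwards [hall, hne 0] with r hr hr0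
    refine generic q s t u w A (Bt r) C D hq hq2 ht hs hu
      (fun i hi k hk hik => (hAA i hi k hk hik).1) ?_ ?_ ?_ hA0
      (fun i hi => mul_ne_zero hr0 (hB0 i hi)) ?_ ?_ ?_
    · intro i hi k hk
      rcases eq_or_ne i k with rfl | hik
      · exact hself _ (hA0 i hi)
      · exact (hAA i hi k hk hik).2.2
    · intro i hi k hk hik e
      exact (hBB i hi k hk hik).1 (mul_left_cancel₀ hr0 e)
    · intro i hi k hk
      rcases eq_or_ne i k with rfl | hik
      · exact hself _ (mul_ne_zero hr0 (hB0 i hi))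
      · intro e
        refine (hBB i hi k hk hik).2.2 (mul_left_cancel₀ hr0 ?_)
        simp only [Bt] at e
        rw [e]; ring
    · intro j hj l hl e
      have := hB0 l hl
      refine (hr j hj l hl).1 ?_
      rw [e]; simp only [Bt]; field_simp
    · intro j hj l hl e
      have := hB0 l hl
      refine (hr j hj l hl).2.1 ?_
      rw [e]; simp only [Bt]; field_simp
    · intro j hj l hl e
      have := hB0 l hl
      refine (hr j hj l hl).2.2 ?_
      rw [e]; simp only [Bt]; field_simp
  have l1 : Tendsto (fun r => lhsA21 q s t u w A (Bt r) C D) (𝓝[≠] 1)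
      (𝓝 (lhsA21 q s t u w A (Bt 1) C D)) := hcont.tendsto.mono_left nhdsWithin_le_nhds
  have l2 : Tendsto (fun r => lhsA21 q s t u w A (Bt r) C D) (𝓝[≠] 1) (𝓝 0) :=
    tendsto_const_nhds.congr' (hzero.mono fun r hr => hr.symm)
  have := tendsto_nhds_unique l1 l2
  rwa [hBt] at this

/-- Identity (A21). -/
theorem identity_A21 (q : ℂ) (hq : q ≠ 0) (hq2 : q ^ 2 ≠ 1) (n : ℕ) (hn : 2 ≤ n)
    (A B C D : ℕ → ℂ)
    (hA0 : ∀ i ∈ Finset.Icc 1 (n - 1), A i ≠ 0)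
    (hB0 : ∀ i ∈ Finset.Icc 1 n, B i ≠ 0)
    (hAA : ∀ j ∈ Finset.Icc 1 (n - 1), ∀ i ∈ Finset.Icc 1 (n - 1), j ≠ i →
      A j ≠ A i ∧ A j ≠ q ^ 2 * A i ∧ A j ≠ (q ^ 2)⁻¹ * A i)
    (hBB : ∀ l ∈ Finset.Icc 1 n, ∀ i ∈ Finset.Icc 1 n, l ≠ i →
      B l ≠ B i ∧ B l ≠ q ^ 2 * B i ∧ B l ≠ (q ^ 2)⁻¹ * B i) :
    (∑ j ∈ Finset.Icc 1 (n - 1), ∑ l ∈ Finset.Icc 1 n,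
      q * ((∏ i ∈ (Finset.Icc 1 n).erase l, (A j - (q ^ 2)⁻¹ * B i)) *
            (∏ i ∈ Finset.Icc 1 (n - 2), (A j - (q ^ 2)⁻¹ * D i)) *
            (∏ i ∈ Finset.Icc 1 (n + 1), (B l - C i)) *
            ∏ i ∈ (Finset.Icc 1 (n - 1)).erase j, (B l - A i)) /
          (A j * B l *
            (∏ i ∈ (Finset.Icc 1 (n - 1)).erase j, (A j - A i) * (A j - (q ^ 2)⁻¹ * A i)) *
            ∏ i ∈ (Finset.Icc 1 n).erase l, (B l - B i) * (B l - (q ^ 2)⁻¹ * B i)))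
    - (∑ j ∈ Finset.Icc 1 (n - 1), ∑ l ∈ Finset.Icc 1 n,
      q⁻¹ * ((∏ i ∈ (Finset.Icc 1 n).erase l, (A j - B i)) *
            (∏ i ∈ Finset.Icc 1 (n - 2), (A j - D i)) *
            (∏ i ∈ Finset.Icc 1 (n + 1), (B l - q ^ 2 * C i)) *
            ∏ i ∈ (Finset.Icc 1 (n - 1)).erase j, (B l - q ^ 2 * A i)) /
          (A j * B l *
            (∏ i ∈ (Finset.Icc 1 (n - 1)).erase j, (A j - A i) * (A j - q ^ 2 * A i)) *
            ∏ i ∈ (Finset.Icc 1 n).erase l, (B l - B i) * (B l - q ^ 2 * B i)))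
    - (q - q⁻¹) * (1 - q ^ 2 *
        ((∏ i ∈ Finset.Icc 1 (n - 2), D i) * ∏ i ∈ Finset.Icc 1 (n + 1), C i) /
        ((∏ i ∈ Finset.Icc 1 (n - 1), A i) * ∏ i ∈ Finset.Icc 1 n, B i)) = 0 := by
  exact general q (Finset.Icc 1 (n - 1)) (Finset.Icc 1 n) (Finset.Icc 1 (n + 1))
    (Finset.Icc 1 (n - 2)) A B C D hq hq2 (by simp; omega) (by simp; omega) (by simp; omega)
    hA0 hB0 hAA hBB
end
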